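/- Let p be a prime and let (a_n)_{n≥0} be a sequence in ℚ_p such that ‖a_n‖_p → 0 as n → ∞, but for every real r > 1 it is NOT the case that ‖a_n‖_p · r^n → 0 as n → ∞ (equivalently, v_p(a_n) → ∞ but liminf_n v_p(a_n)/n = 0). Then the power series s = Σ_{n≥0} a_n x^n ∈ ℚ_p[[x]] is transcendental over ℚ_p(x): for every nonzero polynomial F ∈ ℚ_p[X,Y], one has F(x, s(x)) ≠ 0 in ℚ_p[[x]]. -/

import Mathlib

open Filter PowerSeries

/-- Weighted bound on the coefficients of a power series. -/
def WBd {p : ℕ} [Fact p.Prime] (q : ℝ) (k : ℕ) (f : PowerSeries ℚ_[p]) (c : ℝ) : Prop :=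
  ∀ n, ‖PowerSeries.coeff n f‖ ≤ c * q ^ (min n k)

lemma WBd.nonneg {p : ℕ} [Fact p.Prime] {q : ℝ} {k : ℕ} {f : PowerSeries ℚ_[p]} {c : ℝ}
    (h : WBd q k f c) : 0 ≤ c := by
  have := h 0
  simp only [Nat.zero_le, inf_of_le_left, pow_zero, mul_one] at this
  exact (norm_nonneg _).trans this

lemma WBd.mono {p : ℕ} [Fact p.Prime] {q : ℝ} (hq : 0 < q) {k : ℕ} {f : PowerSeries ℚ_[p]} {c d : ℝ}
    (h : WBd q k f c) (hcd : c ≤ d) : WBd q k f d := fun n =>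
  (h n).trans (mul_le_mul_of_nonneg_right hcd (by positivity))

lemma wt_mul {q : ℝ} (hq : 0 < q) (hq1 : q ≤ 1) (i j k : ℕ) :
    q ^ (min i k) * q ^ (min j k) ≤ q ^ (min (i + j) k) := by
  rw [← pow_add]
  exact pow_le_pow_of_le_one hq.le hq1 (by omega)

lemma WBd.mul {p : ℕ} [Fact p.Prime] {q : ℝ} (hq : 0 < q) (hq1 : q ≤ 1) {k : ℕ}
    {f g : PowerSeries ℚ_[p]} {c d : ℝ}
    (hf : WBd q k f c) (hg : WBd q k g d) : WBd q k (f * g) (c * d) := by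
  intro n
  have hc := hf.nonneg
  have hd := hg.nonneg
  rw [PowerSeries.coeff_mul]
  apply IsUltrametricDist.norm_sum_le_of_forall_le_of_nonneg
  · positivity
  · rintro ⟨i, j⟩ hij
    rw [Finset.HasAntidiagonal.mem_antidiagonal] at hij
    simp only at hij ⊢
    rw [norm_mul]
    calc _ ≤ (c * q ^ min i k) * (d * q ^ min j k) :=
          mul_le_mul (hf i) (hg j) (norm_nonneg _) (by positivity)
      _ = c * d * (q ^ min i k * q ^ min j k) := by ring
      _ ≤ c * d * q ^ min n k := by
          rw [← hij]
          exact mul_le_mul_of_nonneg_left (wt_mul hq hq1 _ _ _) (by positivity)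

lemma WBd.pow {p : ℕ} [Fact p.Prime] {q : ℝ} (hq : 0 < q) (hq1 : q ≤ 1) {k : ℕ}
    {f : PowerSeries ℚ_[p]} {c : ℝ}
    (hf : WBd q k f c) (j : ℕ) : WBd q k (f ^ j) (c ^ j) := by
  induction j with
  | zero =>
    intro n
    rw [pow_zero, pow_zero, PowerSeries.coeff_one]
    split_ifs with h
    · simp [h]
    · simp only [norm_zero]; positivity
  | succ j ih =>
    rw [pow_succ, pow_succ]
    exact ih.mul hq hq1 hf

lemma WBd.add {p : ℕ} [Fact p.Prime] {q : ℝ} {k : ℕ}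
    {f g : PowerSeries ℚ_[p]} {c : ℝ}
    (hf : WBd q k f c) (hg : WBd q k g c) : WBd q k (f + g) c := by
  intro n
  rw [map_add]
  exact (IsUltrametricDist.norm_add_le_max _ _).trans (max_le (hf n) (hg n))

lemma last_max (v : ℕ → ℝ) (hv : Tendsto v atTop (nhds 0)) (n0 : ℕ) (h : 0 < v n0) :
    ∃ n, v n0 ≤ v n ∧ (∀ j, v j ≤ v n) ∧ ∀ j, n < j → v j < v n := by
  obtain ⟨N, hN⟩ := eventually_atTop.1 (hv.eventually (gt_mem_nhds h))
  have hn0N : n0 < N := by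
    by_contra hh
    exact lt_irrefl _ (hN n0 (not_lt.1 hh))
  obtain ⟨n, hn, hmax⟩ := Finset.exists_max_image (Finset.range N)
    (fun n => toLex (v n, n)) ⟨n0, Finset.mem_range.2 hn0N⟩
  have key : ∀ j, j < N → v j < v n ∨ v j = v n ∧ j ≤ n := by
    intro j hj
    have := hmax j (Finset.mem_range.2 hj)
    rw [Prod.Lex.toLex_le_toLex] at this
    exact this
  have h1 : ∀ j, j < N → v j ≤ v n := fun j hj => by
    rcases key j hj with h | h
    · exact h.le
    · exact h.1.le
  have h2 : v n0 ≤ v n := h1 n0 hn0N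
  refine ⟨n, h2, fun j => ?_, fun j hj => ?_⟩
  · rcases lt_or_ge j N with h | h
    · exact h1 j h
    · exact ((hN j h).trans_le h2).le
  · rcases lt_or_ge j N with h | h
    · rcases key j h with h | h
      · exact h
      · omega
    · exact (hN j h).trans_le h2

lemma ev_lemma (v : ℕ → ℝ) (B : ℝ) (hB : 0 < B) (N : ℕ) (hN : ∀ l, N ≤ l → v l ≤ 0)
    (h : ∀ l, v l < B) : ∀ᶠ q in nhds (1 : ℝ), ∀ l, v l < B * q ^ (l + 2) := by
  have h1 : ∀ᶠ q in nhds (1 : ℝ), ∀ l ∈ Finset.range N, v l < B * q ^ (l + 2) := by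
    rw [Filter.eventually_all_finset]
    intro l _
    have hc : Continuous (fun q : ℝ => B * q ^ (l + 2)) := by fun_prop
    have := hc.tendsto 1
    simp only [one_pow, mul_one] at this
    exact this.eventually (lt_mem_nhds (h l))
  filter_upwards [h1, lt_mem_nhds (zero_lt_one : (0 : ℝ) < 1)] with q hq hq0 l
  rcases lt_or_ge l N with h | h
  · exact hq l (Finset.mem_range.2 h)
  · exact (hN l h).trans_lt (by positivity)

lemma norm_sum_lt' {p : ℕ} [Fact p.Prime] {ι : Type*} (s : Finset ι) (f : ι → ℚ_[p]) (X : ℝ)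
    (hX : 0 < X) (h : ∀ i ∈ s, ‖f i‖ < X) : ‖∑ i ∈ s, f i‖ < X := by
  classical
  induction s using Finset.induction_on with
  | empty => simpa using hX
  | insert a s ha ih =>
    rw [Finset.sum_insert ha]
    refine (IsUltrametricDist.norm_add_le_max _ _).trans_lt (max_lt ?_ ?_)
    · exact h a (Finset.mem_insert_self _ _)
    · exact ih fun i hi => h i (Finset.mem_insert_of_mem hi)

/-- The inductive step: uniform weighted bounds. -/
lemma step {p : ℕ} [Fact p.Prime] (H : Polynomial (Polynomial ℚ_[p])) (u : PowerSeries ℚ_[p])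
    (hu : Tendsto (fun n => ‖PowerSeries.coeff n u‖) atTop (nhds 0))
    (hH : Polynomial.eval₂ Polynomial.coeToPowerSeries.ringHom u H = 0)
    (δ C0 q : ℝ) (m : ℕ) (hδ : 0 < δ) (hC0 : 0 < C0) (hq : 0 < q) (hq1 : q < 1) (hCq : C0 ≤ q)
    (hm : ‖(H.coeff 1).coeff m‖ = δ) (hm1 : ∀ i, ‖(H.coeff 1).coeff i‖ ≤ δ)
    (hm2 : ∀ i, m < i → ‖(H.coeff 1).coeff i‖ < δ * q ^ i)
    (h0 : ∀ l, ‖(H.coeff 0).coeff l‖ ≤ C0 * δ * q ^ l)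
    (hk : ∀ k, 2 ≤ k → ∀ l, ‖(H.coeff k).coeff l‖ * C0 ≤ δ * q ^ (l + 2))
    (k : ℕ) (hprev : WBd q k u C0) : WBd q (k + 1) u C0 := by
  by_contra hcon
  simp only [WBd, not_forall, not_le] at hcon
  obtain ⟨n0, hn0⟩ := hcon
  set w : ℕ → ℝ := fun n => q ^ (min n (k + 1)) with hw
  have hwpos : ∀ n, 0 < w n := fun n => by simp only [hw]; positivity
  have hwanti : ∀ i j, i ≤ j → w j ≤ w i := fun i j hij =>
    pow_le_pow_of_le_one hq.le hq1.le (by omega)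
  have hv0 : C0 < ‖PowerSeries.coeff n0 u‖ / w n0 := by
    rw [lt_div_iff₀ (hwpos _)]; exact hn0
  have hvt : Tendsto (fun n => ‖PowerSeries.coeff n u‖ / w n) atTop (nhds 0) := by
    have h1 : Tendsto (fun n => ‖PowerSeries.coeff n u‖ / q ^ (k + 1)) atTop (nhds 0) := by
      simpa using hu.div_const (q ^ (k + 1))
    refine squeeze_zero (fun n => div_nonneg (norm_nonneg _) (hwpos n).le) (fun n => ?_) h1
    apply div_le_div_of_nonneg_left (norm_nonneg _) (by positivity)
    exact pow_le_pow_of_le_one hq.le hq1.le (by omega)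
  obtain ⟨n, hn1, hn2, hn3⟩ := last_max _ hvt n0 (hC0.trans hv0)
  set C : ℝ := ‖PowerSeries.coeff n u‖ / w n with hC
  have hCC0 : C0 < C := hv0.trans_le hn1
  have hCpos : 0 < C := hC0.trans hCC0
  have hun : ‖PowerSeries.coeff n u‖ = C * w n := by
    rw [hC, div_mul_cancel₀ _ (hwpos n).ne']
  have hub : WBd q (k + 1) u C := fun j => by
    have := hn2 j
    rwa [div_le_iff₀ (hwpos j)] at this
  have hub' : ∀ j, n < j → ‖PowerSeries.coeff j u‖ < C * w j := fun j hj => by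
    have := hn3 j hj
    rwa [div_lt_iff₀ (hwpos j)] at this
  -- C ≤ C0 / q
  have hCle : C * q ≤ C0 := by
    have h1 := hprev n
    rw [hun] at h1
    have h2 : q ^ (min n k) * q ≤ w n := by
      rw [← pow_succ]
      exact pow_le_pow_of_le_one hq.le hq1.le (by omega)
    have h3 : C * q * q ^ (min n k) ≤ C0 * q ^ (min n k) := by
      calc C * q * q ^ (min n k) = C * (q ^ (min n k) * q) := by ring
        _ ≤ C * w n := mul_le_mul_of_nonneg_left h2 hCpos.le
        _ ≤ _ := h1
    exact le_of_mul_le_mul_right h3 (by positivity)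
  have hC1 : C ≤ 1 := by
    have : C * q ≤ 1 * q := by linarith
    exact le_of_mul_le_mul_right this hq
  set X : ℝ := δ * C * w n with hX
  have hXpos : 0 < X := by have := hwpos n; positivity
  -- coefficient m + n of the equation
  have heq := congrArg (PowerSeries.coeff (m + n)) hH
  rw [Polynomial.eval₂_eq_sum_range' _ (n := H.natDegree + 2) (by omega), map_sum, map_zero] at heq
  rw [← Finset.add_sum_erase _ _ (Finset.mem_range.2 (by omega : 1 < H.natDegree + 2))] at heq
  have hrest : ‖∑ x ∈ (Finset.range (H.natDegree + 2)).erase 1, PowerSeries.coeff (m + n)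
      (Polynomial.coeToPowerSeries.ringHom (H.coeff x) * u ^ x)‖ < X := by
    apply norm_sum_lt' _ _ _ hXpos
    intro x hx
    have hx1 : x ≠ 1 := Finset.ne_of_mem_erase hx
    rcases Nat.eq_zero_or_pos x with rfl | hx0
    · rw [pow_zero, mul_one]
      simp only [Polynomial.coeToPowerSeries.ringHom_apply, Polynomial.coeff_coe]
      calc _ ≤ C0 * δ * q ^ (m + n) := h0 _
        _ ≤ C0 * δ * w n := mul_le_mul_of_nonneg_left
            (pow_le_pow_of_le_one hq.le hq1.le (by omega)) (by positivity)
        _ < X := by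
            rw [hX, mul_comm δ C]
            have := hwpos n
            gcongr
    · have hx2 : 2 ≤ x := by omega
      have hb : WBd q (k + 1) (Polynomial.coeToPowerSeries.ringHom (H.coeff x)) (δ * q ^ 2 / C0) := by
        intro l
        simp only [Polynomial.coeToPowerSeries.ringHom_apply, Polynomial.coeff_coe]
        have h1 := hk x hx2 l
        rw [← le_div_iff₀ hC0] at h1
        calc _ ≤ δ * q ^ (l + 2) / C0 := h1
          _ = δ * q ^ 2 / C0 * q ^ l := by rw [pow_add]; ring
          _ ≤ _ := mul_le_mul_of_nonneg_left
            (pow_le_pow_of_le_one hq.le hq1.le (by omega)) (by positivity)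
      have hb2 := (hb.mul hq hq1.le (hub.pow hq hq1.le x)) (m + n)
      have hCx : C ^ x ≤ C ^ 2 := pow_le_pow_of_le_one hCpos.le hC1 hx2
      have h3 : δ * q ^ 2 / C0 * C ^ x ≤ δ * q * C := by
        rw [div_mul_eq_mul_div, div_le_iff₀ hC0]
        calc δ * q ^ 2 * C ^ x ≤ δ * q ^ 2 * C ^ 2 := by gcongr
          _ = δ * q * C * (C * q) := by ring
          _ ≤ δ * q * C * C0 := by gcongr
      calc _ ≤ _ := hb2
        _ ≤ δ * q * C * w n := mul_le_mul h3 (hwanti n (m + n) (by omega)) (hwpos _).le (by positivity)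
        _ < X := by
          rw [hX]
          have : δ * q * C < δ * C := by nlinarith [mul_pos hδ hCpos]
          exact mul_lt_mul_of_pos_right this (hwpos n)
  rw [pow_one, PowerSeries.coeff_mul,
    ← Finset.add_sum_erase _ _ (Finset.HasAntidiagonal.mem_antidiagonal.2 rfl : (m, n) ∈ Finset.HasAntidiagonal.antidiagonal (m + n))] at heq
  have hrest2 : ‖∑ x ∈ (Finset.HasAntidiagonal.antidiagonal (m + n)).erase (m, n),
      PowerSeries.coeff x.1 (Polynomial.coeToPowerSeries.ringHom (H.coeff 1)) *
        PowerSeries.coeff x.2 u‖ < X := by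
    apply norm_sum_lt' _ _ _ hXpos
    rintro ⟨i, j⟩ hij
    have hne := Finset.ne_of_mem_erase hij
    have hsum := Finset.HasAntidiagonal.mem_antidiagonal.1 (Finset.mem_of_mem_erase hij)
    simp only [Polynomial.coeToPowerSeries.ringHom_apply, Polynomial.coeff_coe] at hsum ⊢
    rw [norm_mul]
    rcases lt_trichotomy i m with h | h | h
    · have hj : n < j := by omega
      calc _ ≤ δ * ‖PowerSeries.coeff j u‖ := mul_le_mul_of_nonneg_right (hm1 i) (norm_nonneg _)
        _ < δ * (C * w j) := mul_lt_mul_of_pos_left (hub' j hj) hδ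
        _ ≤ δ * (C * w n) := by
            have := hwanti n j hj.le
            gcongr
        _ = X := by rw [hX]; ring
    · exact absurd (by rw [h, show j = n by omega]) hne
    · calc _ ≤ ‖(H.coeff 1).coeff i‖ * (C * w j) := mul_le_mul_of_nonneg_left (hub j) (norm_nonneg _)
        _ < δ * q ^ i * (C * w j) := mul_lt_mul_of_pos_right (hm2 i h) (mul_pos hCpos (hwpos j))
        _ = δ * C * (q ^ i * w j) := by ring
        _ ≤ δ * C * w n := by
            apply mul_le_mul_of_nonneg_left _ (by positivity)
            simp only [hw]
            rw [← pow_add]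
            exact pow_le_pow_of_le_one hq.le hq1.le (by omega)
  have hmain : ‖PowerSeries.coeff m (Polynomial.coeToPowerSeries.ringHom (H.coeff 1)) *
        PowerSeries.coeff n u‖ = X := by
    simp only [Polynomial.coeToPowerSeries.ringHom_apply, Polynomial.coeff_coe]
    rw [norm_mul, hm, hun, hX]; ring
  rw [add_assoc] at heq
  have h5 := eq_neg_of_add_eq_zero_left heq
  simp only at h5
  rw [h5, norm_neg] at hmain
  exact absurd hmain ((IsUltrametricDist.norm_add_le_max _ _).trans_lt (max_lt hrest2 hrest)).ne

lemma key {p : ℕ} [Fact p.Prime] (H : Polynomial (Polynomial ℚ_[p])) (u : PowerSeries ℚ_[p])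
    (hu : Tendsto (fun n => ‖PowerSeries.coeff n u‖) atTop (nhds 0))
    (hH : Polynomial.eval₂ Polynomial.coeToPowerSeries.ringHom u H = 0)
    (δ C0 M ε : ℝ) (m : ℕ) (hδ : 0 < δ) (hε0 : 0 < ε) (hεC : ε < C0) (hC1 : C0 < 1)
    (hm : ‖(H.coeff 1).coeff m‖ = δ) (hm1 : ∀ i, ‖(H.coeff 1).coeff i‖ ≤ δ)
    (hm2 : ∀ i, m < i → ‖(H.coeff 1).coeff i‖ < δ)
    (hk : ∀ k, 2 ≤ k → ∀ l, ‖(H.coeff k).coeff l‖ ≤ M) (hM : M * C0 < δ)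
    (hε : ∀ n, ‖PowerSeries.coeff n u‖ ≤ ε) :
    ∃ q : ℝ, 0 < q ∧ q < 1 ∧ ∀ n, ‖PowerSeries.coeff n u‖ ≤ C0 * q ^ n := by
  have hC0 : 0 < C0 := hε0.trans hεC
  have hu0 : WBd 1 0 u ε := fun n => by simpa using hε n
  have h0 : ∀ l, ‖(H.coeff 0).coeff l‖ ≤ δ * ε := by
    intro l
    have heq := congrArg (PowerSeries.coeff l) hH
    rw [Polynomial.eval₂_eq_sum_range' _ (n := H.natDegree + 2) (by omega), map_sum, map_zero,
      ← Finset.add_sum_erase _ _ (Finset.mem_range.2 (by omega : 0 < H.natDegree + 2))] at heq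
    have h5 := eq_neg_of_add_eq_zero_left heq
    simp only [pow_zero, mul_one, Polynomial.coeToPowerSeries.ringHom_apply,
      Polynomial.coeff_coe] at h5
    rw [h5, norm_neg]
    apply IsUltrametricDist.norm_sum_le_of_forall_le_of_nonneg (by positivity)
    intro x hx
    have hx0 : x ≠ 0 := Finset.ne_of_mem_erase hx
    by_cases hx1 : x = 1
    · subst hx1
      rw [pow_one]
      have hb : WBd 1 0 ((H.coeff 1 : Polynomial ℚ_[p]) : PowerSeries ℚ_[p]) δ := fun n => by
        simpa using hm1 n
      simpa using (hb.mul one_pos le_rfl hu0) l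
    · have hx2 : 2 ≤ x := by omega
      have hb : WBd 1 0 ((H.coeff x : Polynomial ℚ_[p]) : PowerSeries ℚ_[p]) M := fun n => by
        simpa using hk x hx2 n
      have h6 := (hb.mul one_pos le_rfl (hu0.pow one_pos le_rfl x)) l
      have hMn := hb.nonneg
      simp only [one_pow, mul_one] at h6
      refine h6.trans ?_
      calc M * ε ^ x ≤ M * ε ^ 2 := mul_le_mul_of_nonneg_left
            (pow_le_pow_of_le_one hε0.le (by linarith) hx2) hMn
        _ = M * ε * ε := by ring
        _ ≤ M * C0 * ε := by gcongr
        _ ≤ δ * ε := by gcongr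
  have e0 := ev_lemma (fun l => ‖(H.coeff 0).coeff l‖) (C0 * δ) (by positivity)
    ((H.coeff 0).natDegree + 1)
    (fun l hl => by simp [Polynomial.coeff_eq_zero_of_natDegree_lt (by omega : (H.coeff 0).natDegree < l)])
    (fun l => (h0 l).trans_lt (by nlinarith))
  have e1 := ev_lemma (fun l => if m < l then ‖(H.coeff 1).coeff l‖ else 0) δ hδ
    ((H.coeff 1).natDegree + 1)
    (fun l hl => by simp [Polynomial.coeff_eq_zero_of_natDegree_lt (by omega : (H.coeff 1).natDegree < l)])
    (fun l => by
      split_ifs with h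
      · exact hm2 l h
      · exact hδ)
  have e2 : ∀ᶠ q in nhds (1 : ℝ), ∀ k ∈ Finset.range (H.natDegree + 1), 2 ≤ k →
      ∀ l, ‖(H.coeff k).coeff l‖ * C0 < δ * q ^ (l + 2) := by
    rw [Filter.eventually_all_finset]
    intro k _
    by_cases h2 : 2 ≤ k
    · have := ev_lemma (fun l => ‖(H.coeff k).coeff l‖ * C0) δ hδ
        ((H.coeff k).natDegree + 1)
        (fun l hl => by simp [Polynomial.coeff_eq_zero_of_natDegree_lt (by omega : (H.coeff k).natDegree < l)])
        (fun l => (mul_le_mul_of_nonneg_right (hk k h2 l) hC0.le).trans_lt hM)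
      filter_upwards [this] with q hq _ using hq
    · filter_upwards with q h using absurd h h2
  have hall := (e0.and (e1.and (e2.and (lt_mem_nhds hC1))))
  have hall2 : ∀ᶠ q in nhdsWithin (1 : ℝ) (Set.Iio 1), _ := hall.filter_mono nhdsWithin_le_nhds
  obtain ⟨q, ⟨f0, f1, f2, f3⟩, hq1⟩ := (hall2.and self_mem_nhdsWithin).exists
  have hq1 : q < 1 := hq1
  have hq : 0 < q := hC0.trans f3
  have hpw : ∀ l, q ^ (l + 2) ≤ q ^ l := fun l => pow_le_pow_of_le_one hq.le hq1.le (by omega)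
  refine ⟨q, hq, hq1, ?_⟩
  have hind : ∀ k, WBd q k u C0 := by
    intro k
    induction k with
    | zero => intro n; simpa using (hε n).trans hεC.le
    | succ k ih =>
      refine step H u hu hH δ C0 q m hδ hC0 hq hq1 f3.le hm hm1 ?_ ?_ ?_ k ih
      · intro i hi
        have := f1 i
        simp only [hi, if_true] at this
        exact this.trans_le (mul_le_mul_of_nonneg_left (hpw i) hδ.le)
      · intro l
        exact (f0 l).le.trans (mul_le_mul_of_nonneg_left (hpw l) (by positivity))
      · intro k hk2 l
        by_cases hkd : k < H.natDegree + 1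
        · exact (f2 k (Finset.mem_range.2 hkd) hk2 l).le
        · rw [Polynomial.coeff_eq_zero_of_natDegree_lt (by omega : H.natDegree < k)]
          simp only [Polynomial.coeff_zero, norm_zero, zero_mul]
          positivity
  intro n
  simpa using hind n n

/-- Boundedness and Lipschitz property of polynomial evaluation. -/
lemma eval_bd {p : ℕ} [Fact p.Prime] (T : ℝ) (P : Polynomial (Polynomial ℚ_[p])) :
    ∃ M : ℝ, 0 ≤ M ∧ (∀ f : PowerSeries ℚ_[p], WBd 1 0 f T →
        WBd 1 0 (Polynomial.eval₂ Polynomial.coeToPowerSeries.ringHom f P) M) ∧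
      (∀ (f g : PowerSeries ℚ_[p]) (ε : ℝ), WBd 1 0 f T → WBd 1 0 g T → WBd 1 0 (f - g) ε →
        WBd 1 0 (Polynomial.eval₂ Polynomial.coeToPowerSeries.ringHom f P -
          Polynomial.eval₂ Polynomial.coeToPowerSeries.ringHom g P) (M * ε)) := by
  induction P using Polynomial.induction_on with
  | C a =>
    refine ⟨∑ i ∈ Finset.range (a.natDegree + 1), ‖a.coeff i‖,
      Finset.sum_nonneg fun i _ => norm_nonneg _, fun f _ n => ?_, fun f g ε _ _ h n => ?_⟩
    · simp only [Polynomial.eval₂_C, Polynomial.coeToPowerSeries.ringHom_apply,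
        Polynomial.coeff_coe, one_pow, mul_one]
      by_cases hn : n < a.natDegree + 1
      · exact Finset.single_le_sum (f := fun i => ‖a.coeff i‖) (fun i _ => norm_nonneg _)
          (Finset.mem_range.2 hn)
      · rw [Polynomial.coeff_eq_zero_of_natDegree_lt (by omega), norm_zero]
        exact Finset.sum_nonneg fun i _ => norm_nonneg _
    · simp only [Polynomial.eval₂_C, sub_self, map_zero, norm_zero, one_pow, mul_one]
      exact mul_nonneg (Finset.sum_nonneg fun i _ => norm_nonneg _) h.nonneg
  | add P Q hP hQ =>
    obtain ⟨M1, h1, h2, h3⟩ := hP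
    obtain ⟨M2, k1, k2, k3⟩ := hQ
    refine ⟨max M1 M2, le_max_of_le_left h1, fun f hf => ?_, fun f g ε hf hg h => ?_⟩
    · rw [Polynomial.eval₂_add]
      exact ((h2 f hf).mono one_pos (le_max_left _ _)).add ((k2 f hf).mono one_pos (le_max_right _ _))
    · rw [Polynomial.eval₂_add, Polynomial.eval₂_add, add_sub_add_comm]
      have := h.nonneg
      exact ((h3 f g ε hf hg h).mono one_pos (by gcongr; exact le_max_left _ _)).add
        ((k3 f g ε hf hg h).mono one_pos (by gcongr; exact le_max_right _ _))
  | monomial n a ih =>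
    obtain ⟨M, h1, h2, h3⟩ := ih
    refine ⟨max (M * |T|) M, le_max_of_le_right h1, fun f hf => ?_, fun f g ε hf hg h => ?_⟩
    · rw [pow_succ, ← mul_assoc, Polynomial.eval₂_mul_X]
      refine ((h2 f hf).mul one_pos le_rfl hf).mono one_pos (le_max_of_le_left ?_)
      gcongr; exact le_abs_self T
    · rw [pow_succ, ← mul_assoc, Polynomial.eval₂_mul_X, Polynomial.eval₂_mul_X]
      set A := Polynomial.eval₂ Polynomial.coeToPowerSeries.ringHom f
        (Polynomial.C a * Polynomial.X ^ n)
      set B := Polynomial.eval₂ Polynomial.coeToPowerSeries.ringHom g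
        (Polynomial.C a * Polynomial.X ^ n)
      have he : A * f - B * g = (A - B) * f + B * (f - g) := by ring
      rw [he]
      have hε := h.nonneg
      apply WBd.add
      · refine ((h3 f g ε hf hg h).mul one_pos le_rfl hf).mono one_pos ?_
        calc M * ε * T ≤ M * ε * |T| := by gcongr; exact le_abs_self T
          _ = M * |T| * ε := by ring
          _ ≤ _ := by gcongr; exact le_max_left _ _
      · refine ((h2 g hg).mul one_pos le_rfl h).mono one_pos ?_
        gcongr; exact le_max_right _ _

lemma overconv {p : ℕ} [Fact p.Prime] (a : ℕ → ℚ_[p])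
    (h0 : Tendsto (fun n => ‖a n‖) atTop (nhds 0)) (F : Polynomial (Polynomial ℚ_[p]))
    (hF : Polynomial.eval₂ Polynomial.coeToPowerSeries.ringHom (PowerSeries.mk a) F = 0)
    (hF' : Polynomial.eval₂ Polynomial.coeToPowerSeries.ringHom (PowerSeries.mk a)
      (Polynomial.derivative F) ≠ 0) :
    ∃ q C : ℝ, 0 < q ∧ q < 1 ∧ ∀ᶠ n in atTop, ‖a n‖ ≤ C * q ^ n := by
  obtain ⟨T, hT⟩ := h0.bddAbove_range
  have hT : ∀ n, ‖a n‖ ≤ T := fun n => hT ⟨n, rfl⟩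
  have hT0 : 0 ≤ T := (norm_nonneg _).trans (hT 0)
  have hs : WBd 1 0 (PowerSeries.mk a) T := fun n => by simpa using hT n
  choose Mk hMk0 hMk1 hMk2 using fun k => eval_bd T (Polynomial.hasseDeriv k F)
  set M : ℝ := 1 + ∑ k ∈ Finset.range (F.natDegree + 2), Mk k with hM
  have hMpos : 0 < M := by
    have := Finset.sum_nonneg (s := Finset.range (F.natDegree + 2)) fun i _ => hMk0 i
    linarith
  have hMle : ∀ k, k < F.natDegree + 2 → Mk k ≤ M := fun k hk => by
    have := Finset.single_le_sum (f := Mk) (fun i _ => hMk0 i) (Finset.mem_range.2 hk)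
    linarith
  obtain ⟨i0, hi0⟩ : ∃ i, PowerSeries.coeff i (Polynomial.eval₂ Polynomial.coeToPowerSeries.ringHom
      (PowerSeries.mk a) (Polynomial.derivative F)) ≠ 0 := by
    by_contra hh
    push Not at hh
    exact hF' (PowerSeries.ext fun i => by rw [hh i, map_zero])
  set δ0 := ‖PowerSeries.coeff i0 (Polynomial.eval₂ Polynomial.coeToPowerSeries.ringHom
      (PowerSeries.mk a) (Polynomial.derivative F))‖ with hδ0
  have hδ0pos : 0 < δ0 := norm_pos_iff.2 hi0
  obtain ⟨C0, hC0, hC1, hC2⟩ : ∃ C0 : ℝ, 0 < C0 ∧ C0 < 1 ∧ M * C0 < δ0 := by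
    refine ⟨min (1 / 2) (δ0 / (2 * M)), by positivity, (min_le_left _ _).trans_lt (by norm_num), ?_⟩
    calc M * _ ≤ M * (δ0 / (2 * M)) := by gcongr; exact min_le_right _ _
      _ = δ0 / 2 := by field_simp
      _ < δ0 := by linarith
  set ε := C0 / 2 with hε
  have hεpos : 0 < ε := by positivity
  obtain ⟨N, hN⟩ := eventually_atTop.1 (h0.eventually (gt_mem_nhds hεpos))
  set t : Polynomial ℚ_[p] := PowerSeries.trunc N (PowerSeries.mk a) with ht
  set u : PowerSeries ℚ_[p] := PowerSeries.mk a - (t : PowerSeries ℚ_[p]) with hu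
  have hucoeff : ∀ n, PowerSeries.coeff n u = if n < N then 0 else a n := by
    intro n
    rw [hu, map_sub, Polynomial.coeff_coe, ht, PowerSeries.coeff_trunc, PowerSeries.coeff_mk]
    split_ifs <;> simp
  have huε : ∀ n, ‖PowerSeries.coeff n u‖ ≤ ε := by
    intro n
    rw [hucoeff]
    split_ifs with h
    · simpa using hεpos.le
    · exact (hN n (not_lt.1 h)).le
  have htT : WBd 1 0 (t : PowerSeries ℚ_[p]) T := by
    intro n
    rw [Polynomial.coeff_coe, ht, PowerSeries.coeff_trunc, PowerSeries.coeff_mk]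
    split_ifs
    · simpa using hT n
    · simpa using hT0
  have hutend : Tendsto (fun n => ‖PowerSeries.coeff n u‖) atTop (nhds 0) := by
    refine squeeze_zero (fun n => norm_nonneg _) (fun n => ?_) h0
    rw [hucoeff]
    split_ifs <;> simp
  have hevt : ∀ P : Polynomial (Polynomial ℚ_[p]), ((P.eval t : Polynomial ℚ_[p]) : PowerSeries ℚ_[p])
      = Polynomial.eval₂ Polynomial.coeToPowerSeries.ringHom (t : PowerSeries ℚ_[p]) P := by
    intro P
    have := Polynomial.eval₂_at_apply (p := P) (Polynomial.coeToPowerSeries.ringHom (R := ℚ_[p])) t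
    simpa using this.symm
  set H := Polynomial.taylor t F with hH
  have hHu : Polynomial.eval₂ Polynomial.coeToPowerSeries.ringHom u H = 0 := by
    rw [hH, Polynomial.taylor_apply, Polynomial.eval₂_comp, Polynomial.eval₂_add,
      Polynomial.eval₂_X, Polynomial.eval₂_C, Polynomial.coeToPowerSeries.ringHom_apply, hu,
      sub_add_cancel, hF]
  have hd0 : δ0 ≤ ‖(H.coeff 1).coeff i0‖ := by
    have h1 := hMk2 1 (PowerSeries.mk a) t ε hs htT (fun n => by simpa only [one_pow, mul_one] using huε n) i0
    rw [Polynomial.hasseDeriv_one] at h1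
    rw [hH, Polynomial.taylor_coeff_one, ← Polynomial.coeff_coe, hevt]
    by_contra hlt
    rw [not_le] at hlt
    simp only [map_sub, one_pow, mul_one] at h1
    have h2 : Mk 1 * ε < δ0 := by
      calc Mk 1 * ε ≤ M * ε := by gcongr; exact hMle 1 (by omega)
        _ ≤ M * C0 := by gcongr; linarith
        _ < δ0 := hC2
    have h3 := IsUltrametricDist.norm_add_le_max
      (PowerSeries.coeff i0 (Polynomial.eval₂ Polynomial.coeToPowerSeries.ringHom
        (PowerSeries.mk a) (Polynomial.derivative F)) -
        PowerSeries.coeff i0 (Polynomial.eval₂ Polynomial.coeToPowerSeries.ringHom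
        (t : PowerSeries ℚ_[p]) (Polynomial.derivative F)))
      (PowerSeries.coeff i0 (Polynomial.eval₂ Polynomial.coeToPowerSeries.ringHom
        (t : PowerSeries ℚ_[p]) (Polynomial.derivative F)))
    rw [sub_add_cancel] at h3
    exact absurd (h3.trans_lt (max_lt (h1.trans_lt h2) hlt)) (lt_irrefl _)
  have htend1 : Tendsto (fun i => ‖(H.coeff 1).coeff i‖) atTop (nhds 0) := by
    refine tendsto_const_nhds.congr' ?_
    filter_upwards [eventually_gt_atTop (H.coeff 1).natDegree] with i hi
    rw [Polynomial.coeff_eq_zero_of_natDegree_lt hi, norm_zero]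
  obtain ⟨m, hm0, hm1, hm2⟩ := last_max _ htend1 i0 (hδ0pos.trans_le hd0)
  obtain ⟨q, hq0, hq1, hq⟩ := key H u hutend hHu _ C0 M ε m (hδ0pos.trans_le (hd0.trans hm0))
    hεpos (by linarith) hC1 rfl hm1 hm2 (by
      intro k hk l
      by_cases hkd : k < F.natDegree + 2
      · rw [hH, Polynomial.taylor_coeff, ← Polynomial.coeff_coe, hevt]
        have := hMk1 k t htT l
        simp only [one_pow, mul_one] at this
        exact this.trans (hMle k hkd)
      · rw [Polynomial.coeff_eq_zero_of_natDegree_lt (p := H) (n := k)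
          (by rw [hH, Polynomial.natDegree_taylor]; omega)]
        simpa using hMpos.le) (hC2.trans_le (hd0.trans hm0)) huε
  refine ⟨q, C0, hq0, hq1, ?_⟩
  filter_upwards [eventually_ge_atTop N] with n hn
  have := hq n
  rwa [hucoeff, if_neg (by omega)] at this

/-- A transcendence criterion: a `p`-adic power series converging on the closed unit disk
but on no larger disk is transcendental over `ℚ_p(x)`. -/
theorem stmt_1 (p : ℕ) [Fact p.Prime] (a : ℕ → ℚ_[p])
    (h0 : Tendsto (fun n => ‖a n‖) atTop (nhds 0))
    (h1 : ∀ r : ℝ, 1 < r → ¬ Tendsto (fun n => ‖a n‖ * r ^ n) atTop (nhds 0)) :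
    ∀ F : Polynomial (Polynomial ℚ_[p]), F ≠ 0 →
      Polynomial.eval₂ Polynomial.coeToPowerSeries.ringHom (PowerSeries.mk a) F ≠ 0 := by
  intro F
  induction hd : F.natDegree using Nat.strong_induction_on generalizing F with
  | _ d ih =>
    intro hF0 hF
    rcases Nat.eq_zero_or_pos d with rfl | hdpos
    · rw [Polynomial.eq_C_of_natDegree_eq_zero hd, Polynomial.eval₂_C,
        Polynomial.coeToPowerSeries.ringHom_apply, Polynomial.coe_eq_zero_iff] at hF
      apply hF0
      rw [Polynomial.eq_C_of_natDegree_eq_zero hd, hF, map_zero]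
    · have hlt : (Polynomial.derivative F).natDegree < d := by
        rw [← hd]
        exact Polynomial.natDegree_derivative_lt (by omega)
      have hne : Polynomial.derivative F ≠ 0 := by
        intro h
        have := Polynomial.derivative_eq_zero.1 h
        omega
      obtain ⟨q, C, hq0, hq1, hq⟩ := overconv a h0 F hF (ih _ hlt _ rfl hne)
      obtain ⟨r, hr1, hr2⟩ := exists_between (one_lt_inv₀ hq0 |>.2 hq1)
      apply h1 r hr1
      have hqr : q * r < 1 := by
        calc q * r < q * q⁻¹ := by gcongr
          _ = 1 := mul_inv_cancel₀ hq0.ne'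
      have ht : Tendsto (fun n => C * (q * r) ^ n) atTop (nhds 0) := by
        simpa using (tendsto_pow_atTop_nhds_zero_of_lt_one (by positivity) hqr).const_mul C
      refine squeeze_zero' (Eventually.of_forall fun n => by positivity) ?_ ht
      filter_upwards [hq] with n hn
      rw [mul_pow, ← mul_assoc]
      gcongr
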